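/- (Moore–Aronszajn, existence) Let X be a nonempty set and let K : X × X → ℝ be a kernel function, i.e. K(x,y) = K(y,x) for all x, y ∈ X and Σ_{i=1}^m Σ_{j=1}^m a_i a_j K(x_i, x_j) ≥ 0 for all m ≥ 1, a ∈ ℝ^m, x_1,…,x_m ∈ X. Then there exist a real Hilbert space H and a map φ : X → H such that K(x,y) = ⟪φ(y), φ(x)⟫_H for all x, y ∈ X and the linear span of {φ(x) : x ∈ X} is dense in H. -/

import Mathlib

open scoped RealInnerProductSpace

/-- **Moore–Aronszajn theorem (existence).** Every kernel function (symmetric,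
positive semi-definite) on a nonempty set `X` is realized as the inner product of a
feature map `φ : X → H` into a real Hilbert space `H`, whose range has dense span. -/
theorem moore_aronszajn_existence {X : Type} [Nonempty X] (K : X → X → ℝ)
    (hsymm : ∀ x y : X, K x y = K y x)
    (hpsd : ∀ (m : ℕ), 1 ≤ m → ∀ (a : Fin m → ℝ) (x : Fin m → X),
      0 ≤ ∑ i, ∑ j, a i * a j * K (x i) (x j)) :
    ∃ (H : Type) (_ : NormedAddCommGroup H) (_ : InnerProductSpace ℝ H)
      (_ : CompleteSpace H) (φ : X → H),
      (∀ x y : X, K x y = ⟪φ y, φ x⟫) ∧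
      Dense (Submodule.span ℝ (Set.range φ) : Set H) := by
  classical
  let M : Matrix X X (ℝ →L[ℝ] ℝ) := Matrix.of fun x y => K x y • ContinuousLinearMap.id ℝ ℝ
  have hM : M.PosSemidef := by
    have ht := (RKHS.posSemidef_tfae (K := M)).out 0 2
    refine ht.mpr ⟨?_, fun f => ?_⟩
    · have hid : ContinuousLinearMap.adjoint (ContinuousLinearMap.id ℝ ℝ)
          = ContinuousLinearMap.id ℝ ℝ :=
        ((ContinuousLinearMap.eq_adjoint_iff _ _).mpr (by simp)).symm
      ext x y
      simp [M, Matrix.conjTranspose_apply, ContinuousLinearMap.star_eq_adjoint, hsymm x y, hid]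
    · have key : 0 ≤ ∑ x ∈ f.support, ∑ y ∈ f.support, f x * f y * K x y := by
        rcases Nat.eq_zero_or_pos f.support.card with h | h
        · rw [Finset.card_eq_zero.mp h]; simp
        · let e := f.support.equivFin.symm
          have h1 := hpsd f.support.card h (fun i => f (e i)) (fun i => (e i : X))
          have h2 : ∑ i, ∑ j, f (e i) * f (e j) * K (e i) (e j)
              = ∑ x ∈ f.support, ∑ y ∈ f.support, f x * f y * K x y := by
            rw [e.sum_comp (fun x : f.support => ∑ j, f x * f (e j) * K x (e j))]
            rw [← Finset.sum_coe_sort f.support]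
            refine Finset.sum_congr rfl fun x _ => ?_
            rw [e.sum_comp (fun y : f.support => f x * f y * K x y)]
            rw [← Finset.sum_coe_sort f.support]
          rw [← h2]; exact h1
      refine key.trans_eq ?_
      simp only [Finsupp.sum, RCLike.re_to_real]
      refine Finset.sum_congr rfl fun x _ => Finset.sum_congr rfl fun y _ => ?_
      simp [M, hsymm x y]
      ring
  have : Fact M.PosSemidef := ⟨hM⟩
  refine ⟨RKHS.OfKernel M, inferInstance, inferInstance, inferInstance,
    fun x => RKHS.kerFun (RKHS.OfKernel M) x (1 : ℝ), fun x y => ?_, ?_⟩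
  · rw [← RKHS.kernel_inner, RKHS.OfKernel.kernel_ofKernel]
    simp [M]
  · rw [Submodule.dense_iff_topologicalClosure_eq_top, eq_top_iff,
      ← RKHS.kerFun_dense (RKHS.OfKernel M)]
    refine Submodule.topologicalClosure_mono (Submodule.span_le.mpr ?_)
    rintro _ ⟨x, v, rfl⟩
    have : RKHS.kerFun (RKHS.OfKernel M) x v
        = v • RKHS.kerFun (RKHS.OfKernel M) x (1 : ℝ) := by
      rw [← map_smul]; simp
    rw [this]
    exact Submodule.smul_mem _ _ (Submodule.subset_span ⟨x, rfl⟩)
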